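/- Let ν ≥ 0, let G ∈ ℝ^{r₁×(r₃·r₂)} with ‖G‖_F ≤ ν, let B, B̃ ∈ ℝ^{m×r₂} and C, C̃ ∈ ℝ^{p×r₃} all have orthonormal columns, and let x ∈ ℝ^{p·m} (indexed by Fin p × Fin m). Then ‖G (C̃ ⊗ B̃)ᵀ x xᵀ (C̃ ⊗ B̃) − G (C ⊗ B)ᵀ x xᵀ (C ⊗ B)‖_F ≤ 2 ν ‖x‖₂² (‖B̃ − B‖_F + ‖C̃ − C‖_F). -/

import Mathlib

open Matrix
open scoped Kronecker

/-- The Euclidean (ℓ²) norm of a real vector. -/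
noncomputable def euclNorm {n : Type*} [Fintype n] (v : n → ℝ) : ℝ :=
  Real.sqrt (∑ i, (v i) ^ 2)

/-- The Frobenius norm of a real matrix. -/
noncomputable def frobNorm {m n : Type*} [Fintype m] [Fintype n] (A : Matrix m n ℝ) : ℝ :=
  Real.sqrt (∑ i, ∑ j, (A i j) ^ 2)

section helpers
attribute [local instance] Matrix.frobeniusNormedAddCommGroup

lemma frobNorm_eq_norm {m n : Type*} [Fintype m] [Fintype n] (A : Matrix m n ℝ) :
    frobNorm A = ‖A‖ := by
  rw [Matrix.frobenius_norm_def, frobNorm, Real.sqrt_eq_rpow]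
  simp

lemma frobNorm_add_le {m n : Type*} [Fintype m] [Fintype n] (A B : Matrix m n ℝ) :
    frobNorm (A + B) ≤ frobNorm A + frobNorm B := by
  simp only [frobNorm_eq_norm]; exact norm_add_le _ _

lemma frobNorm_mul_le {l m n : Type*} [Fintype l] [Fintype m] [Fintype n]
    (A : Matrix l m ℝ) (B : Matrix m n ℝ) :
    frobNorm (A * B) ≤ frobNorm A * frobNorm B := by
  simp only [frobNorm_eq_norm]; exact Matrix.frobenius_norm_mul _ _

lemma frobNorm_transpose {m n : Type*} [Fintype m] [Fintype n] (A : Matrix m n ℝ) :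
    frobNorm Aᵀ = frobNorm A := by
  simp only [frobNorm_eq_norm]; exact Matrix.frobenius_norm_transpose _

end helpers

lemma frobNorm_nonneg {m n : Type*} [Fintype m] [Fintype n] (A : Matrix m n ℝ) :
    0 ≤ frobNorm A := Real.sqrt_nonneg _

lemma trace_eq_sum_sq {m n : Type*} [Fintype m] [Fintype n] (A : Matrix m n ℝ) :
    (Aᵀ * A).trace = ∑ i, ∑ j, (A i j) ^ 2 := by
  rw [Finset.sum_comm]
  simp [Matrix.trace, Matrix.mul_apply, sq]

lemma frobNorm_contract {m n k : Type*} [Fintype m] [Fintype n] [Fintype k] [DecidableEq k]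
    (C : Matrix m k ℝ) (hC : Cᵀ * C = 1) (Y : Matrix m n ℝ) :
    frobNorm (Cᵀ * Y) ≤ frobNorm Y := by
  apply Real.sqrt_le_sqrt
  rw [← trace_eq_sum_sq, ← trace_eq_sum_sq]
  have h : 0 ≤ ((Y - C * (Cᵀ * Y))ᵀ * (Y - C * (Cᵀ * Y))).trace := by
    rw [trace_eq_sum_sq]; positivity
  have e : (Y - C * (Cᵀ * Y))ᵀ * (Y - C * (Cᵀ * Y)) = Yᵀ * Y - (Cᵀ * Y)ᵀ * (Cᵀ * Y) := by
    have h1 : Cᵀ * (C * (Cᵀ * Y)) = Cᵀ * Y := by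
      rw [← Matrix.mul_assoc, hC, Matrix.one_mul]
    simp only [Matrix.transpose_sub, Matrix.transpose_mul, Matrix.transpose_transpose,
      Matrix.sub_mul, Matrix.mul_sub, Matrix.mul_assoc, h1]
    abel
  rw [e, Matrix.trace_sub] at h
  linarith

lemma frobNorm_contract_right {m n k : Type*} [Fintype m] [Fintype n] [Fintype k] [DecidableEq k]
    (B : Matrix m k ℝ) (hB : Bᵀ * B = 1) (Y : Matrix n m ℝ) :
    frobNorm (Y * B) ≤ frobNorm Y := by
  rw [← frobNorm_transpose (Y * B), ← frobNorm_transpose Y, Matrix.transpose_mul]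
  exact frobNorm_contract B hB _

lemma frobNorm_vecMulVec {m n : Type*} [Fintype m] [Fintype n] (a : m → ℝ) (b : n → ℝ) :
    frobNorm (Matrix.vecMulVec a b) = euclNorm a * euclNorm b := by
  rw [frobNorm, euclNorm, euclNorm, ← Real.sqrt_mul (by positivity), Finset.sum_mul_sum]
  simp [Matrix.vecMulVec_apply, mul_pow]

lemma euclNorm_eq_frobNorm {m n : Type*} [Fintype m] [Fintype n] (a : m × n → ℝ) :
    euclNorm a = frobNorm (Matrix.of fun i j => a (i, j)) := by
  simp [euclNorm, frobNorm, Fintype.sum_prod_type]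

lemma kron_mulVec {m p r s : Type*} [Fintype m] [Fintype p] [Fintype r] [Fintype s]
    (C : Matrix p s ℝ) (B : Matrix m r ℝ) (x : p × m → ℝ) :
    (Matrix.of fun i j => ((C ⊗ₖ B)ᵀ *ᵥ x) (i, j)) =
      Cᵀ * (Matrix.of fun i j => x (i, j)) * B := by
  ext i j
  simp only [Matrix.of_apply, Matrix.mulVec, dotProduct, Matrix.transpose_apply,
    Matrix.kroneckerMap_apply, Fintype.sum_prod_type, Matrix.mul_apply, Finset.sum_mul]
  rw [Finset.sum_comm]
  refine Finset.sum_congr rfl fun _ _ => Finset.sum_congr rfl fun _ _ => by ring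

/-- Quadratic-form perturbation bound in the Kronecker factors: if `‖G‖_F ≤ ν` and
`B, B̃, C, C̃` have orthonormal columns, then
`‖G (C̃ ⊗ B̃)ᵀ x xᵀ (C̃ ⊗ B̃) − G (C ⊗ B)ᵀ x xᵀ (C ⊗ B)‖_F
  ≤ 2 ν ‖x‖₂² (‖B̃ − B‖_F + ‖C̃ − C‖_F)`. -/
theorem quadratic_form_kronecker_perturbation
    (m p r₁ r₂ r₃ : ℕ) (ν : ℝ) (hν : 0 ≤ ν)
    (G : Matrix (Fin r₁) (Fin r₃ × Fin r₂) ℝ) (hG : frobNorm G ≤ ν)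
    (B Bt : Matrix (Fin m) (Fin r₂) ℝ)
    (C Ct : Matrix (Fin p) (Fin r₃) ℝ)
    (hB : Bᵀ * B = 1) (hBt : Btᵀ * Bt = 1)
    (hC : Cᵀ * C = 1) (hCt : Ctᵀ * Ct = 1)
    (x : Fin p × Fin m → ℝ) :
    frobNorm (G * (Ct ⊗ₖ Bt)ᵀ * Matrix.vecMulVec x x * (Ct ⊗ₖ Bt)
              - G * (C ⊗ₖ B)ᵀ * Matrix.vecMulVec x x * (C ⊗ₖ B))
      ≤ 2 * ν * euclNorm x ^ 2 * (frobNorm (Bt - B) + frobNorm (Ct - C)) := by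
  set X : Matrix (Fin p) (Fin m) ℝ := Matrix.of fun i j => x (i, j) with hX
  set u := (C ⊗ₖ B)ᵀ *ᵥ x with hu
  set ut := (Ct ⊗ₖ Bt)ᵀ *ᵥ x with hut
  have hxX : euclNorm x = frobNorm X := euclNorm_eq_frobNorm x
  have hun : euclNorm u ≤ euclNorm x := by
    rw [euclNorm_eq_frobNorm, hu, kron_mulVec, hxX]
    exact (frobNorm_contract_right B hB _).trans (frobNorm_contract C hC _)
  have hutn : euclNorm ut ≤ euclNorm x := by
    rw [euclNorm_eq_frobNorm, hut, kron_mulVec, hxX]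
    exact (frobNorm_contract_right Bt hBt _).trans (frobNorm_contract Ct hCt _)
  have hd : euclNorm (ut - u) ≤ euclNorm x * (frobNorm (Bt - B) + frobNorm (Ct - C)) := by
    have e : (Matrix.of fun i j => (ut - u) (i, j)) =
        Ctᵀ * X * (Bt - B) + (Ct - C)ᵀ * X * B := by
      have e1 := kron_mulVec Ct Bt x
      have e2 := kron_mulVec C B x
      have : (Matrix.of fun i j => (ut - u) (i, j)) =
        (Matrix.of fun i j => ut (i, j)) - (Matrix.of fun i j => u (i, j)) := rfl
      rw [this, e1, e2]
      simp only [Matrix.transpose_sub, Matrix.mul_sub, Matrix.sub_mul]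
      abel
    rw [euclNorm_eq_frobNorm, e, hxX]
    refine (frobNorm_add_le _ _).trans ?_
    have a1 : frobNorm (Ctᵀ * X * (Bt - B)) ≤ frobNorm X * frobNorm (Bt - B) :=
      (frobNorm_mul_le _ _).trans
        (mul_le_mul_of_nonneg_right (frobNorm_contract Ct hCt X) (frobNorm_nonneg _))
    have a2 : frobNorm ((Ct - C)ᵀ * X * B) ≤ frobNorm (Ct - C) * frobNorm X := by
      refine (frobNorm_contract_right B hB _).trans ((frobNorm_mul_le _ _).trans ?_)
      rw [frobNorm_transpose]
    linarith
  have key : G * (Ct ⊗ₖ Bt)ᵀ * Matrix.vecMulVec x x * (Ct ⊗ₖ Bt)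
              - G * (C ⊗ₖ B)ᵀ * Matrix.vecMulVec x x * (C ⊗ₖ B) =
      G * (Matrix.vecMulVec (ut - u) ut + Matrix.vecMulVec u (ut - u)) := by
    have h : ∀ K : Matrix (Fin p × Fin m) (Fin r₃ × Fin r₂) ℝ,
        G * Kᵀ * Matrix.vecMulVec x x * K = G * Matrix.vecMulVec (Kᵀ *ᵥ x) (Kᵀ *ᵥ x) := by
      intro K
      rw [Matrix.mul_assoc, Matrix.mul_assoc, Matrix.vecMulVec_mul, Matrix.mul_vecMulVec,
        Matrix.mulVec_transpose]
    rw [h, h, ← hu, ← hut, ← Matrix.mul_sub, Matrix.sub_vecMulVec, Matrix.vecMulVec_sub]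
    congr 1
    abel
  have hx0 : 0 ≤ euclNorm x := Real.sqrt_nonneg _
  have hd0 : 0 ≤ euclNorm (ut - u) := Real.sqrt_nonneg _
  rw [key]
  refine (frobNorm_mul_le _ _).trans ?_
  have hs : frobNorm (Matrix.vecMulVec (ut - u) ut + Matrix.vecMulVec u (ut - u)) ≤
      2 * euclNorm x ^ 2 * (frobNorm (Bt - B) + frobNorm (Ct - C)) := by
    refine (frobNorm_add_le _ _).trans ?_
    rw [frobNorm_vecMulVec, frobNorm_vecMulVec]
    have b1 := mul_le_mul_of_nonneg_left hutn hd0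
    have b2 := mul_le_mul_of_nonneg_right hun hd0
    have b3 := mul_le_mul_of_nonneg_left hd hx0
    nlinarith
  calc _ ≤ ν * (2 * euclNorm x ^ 2 * (frobNorm (Bt - B) + frobNorm (Ct - C))) :=
        mul_le_mul hG hs (frobNorm_nonneg _) hν
    _ = _ := by ring
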